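/- Let a > 0, b ≥ 1 and n ≥ 1 be an integer, set L = (a n)^{−1/b}, and let P = (1 − 1/n) δ₀ + (1/n) U([0, L]) be the probability measure on ℝ given by the mixture of the Dirac mass at 0 and the uniform distribution on the interval [0, L]. Then P is (a,b)-standard on its support: for every x ∈ [0, L] and every r > 0, P(B(x, r)) ≥ min(1, a r^b). -/

import Mathlib

open MeasureTheory Metric

/-! Write `p` for the weight of the uniform law, so that `a * L ^ b = p = 1 / n`. At scales `r ≤ L`
this law alone suffices: a ball centred in the interval keeps inside it a piece of length at least
`r`, and since `r / L ≤ 1` and `b ≥ 1`, `a * r ^ b = p * (r / L) ^ b ≤ p * (r / L)`. At scales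
`r > L` such a ball contains the whole interval, so it has full mass. -/

open ProbabilityTheory Set

/-- `P` is `(a, b)`-standard at the points of `S`. The set is a parameter, to be taken equal to the
support of `P` to recover the usual notion. -/
def IsStandardOn {X : Type*} [PseudoMetricSpace X] [MeasurableSpace X] (a b : ℝ) (P : Measure X)
    (S : Set X) : Prop :=
  ∀ x ∈ S, ∀ r : ℝ, 0 < r → ENNReal.ofReal (min 1 (a * r ^ b)) ≤ P (ball x r)

section Uniform

variable {c d x r : ℝ}

lemma ofReal_min_le_volume_Icc_inter_ball (hx : x ∈ Icc c d) (hr : 0 ≤ r) :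
    ENNReal.ofReal (min (d - c) r) ≤ volume (Icc c d ∩ ball x r) := by
  have hsub : Ioo (max c (x - r)) (min d (x + r)) ⊆ Icc c d ∩ ball x r := by
    rw [Real.ball_eq_Ioo, ← Ioo_inter_Ioo]
    exact inter_subset_inter_left _ Ioo_subset_Icc_self
  have hlen : min (d - c) r ≤ min d (x + r) - max c (x - r) := by
    obtain ⟨hcx, hxd⟩ := hx
    grind
  calc ENNReal.ofReal (min (d - c) r)
      ≤ ENNReal.ofReal (min d (x + r) - max c (x - r)) := ENNReal.ofReal_le_ofReal hlen
    _ = volume (Ioo (max c (x - r)) (min d (x + r))) := Real.volume_Ioo.symm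
    _ ≤ volume (Icc c d ∩ ball x r) := measure_mono hsub

lemma isStandardOn_cond_volume_Icc (hcd : c < d) :
    IsStandardOn (d - c)⁻¹ 1 (volume[|Icc c d]) (Icc c d) := by
  intro x hx r hr
  have hlen : 0 < d - c := sub_pos.2 hcd
  have hmin : min 1 ((d - c)⁻¹ * r ^ (1 : ℝ)) = (d - c)⁻¹ * min (d - c) r := by
    rw [mul_min_of_nonneg _ _ (inv_nonneg.2 hlen.le), inv_mul_cancel₀ hlen.ne', Real.rpow_one]
  rw [hmin, ENNReal.ofReal_mul (inv_nonneg.2 hlen.le), ENNReal.ofReal_inv_of_pos hlen,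
    cond_apply measurableSet_Icc, Real.volume_Icc]
  gcongr
  exact ofReal_min_le_volume_Icc_inter_ball hx hr.le

end Uniform

lemma mul_rpow_mul_div_rpow {a b r L : ℝ} (hr : 0 ≤ r) (hL : 0 < L) :
    a * L ^ b * (r / L) ^ b = a * r ^ b := by
  rw [mul_assoc, ← Real.mul_rpow hL.le (by positivity), mul_div_cancel₀ r hL.ne']

lemma mul_rpow_le_mul_div_rpow {a b c p r L : ℝ} (hcb : c ≤ b) (hp : 0 ≤ p) (hr : 0 < r)
    (hrL : r ≤ L) (hap : a * L ^ b ≤ p) : a * r ^ b ≤ p * (r / L) ^ c := by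
  have hL : 0 < L := hr.trans_le hrL
  have hratio : 0 < r / L := div_pos hr hL
  calc a * r ^ b = a * L ^ b * (r / L) ^ b := (mul_rpow_mul_div_rpow hr.le hL).symm
    _ ≤ p * (r / L) ^ b := by gcongr
    _ ≤ p * (r / L) ^ c := mul_le_mul_of_nonneg_left
        (Real.rpow_le_rpow_of_exponent_ge hratio ((div_le_one hL).2 hrL) hcb) hp

lemma rpow_neg_one_div_rpow {x b : ℝ} (hx : 0 ≤ x) (hb : b ≠ 0) :
    (x ^ (-(1 / b))) ^ b = x⁻¹ := by
  rw [← Real.rpow_mul hx, neg_mul, one_div_mul_cancel hb, Real.rpow_neg_one]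

section Mixture

variable {X : Type*} [PseudoMetricSpace X] [MeasurableSpace X] {S : Set X} {μ ν : Measure X}
  {a b c k p L r : ℝ} {x : X}

lemma IsStandardOn.ofReal_min_div_rpow_le (hν : IsStandardOn k c ν S) (hkL : 1 ≤ k * L ^ c)
    (hL : 0 < L) (hx : x ∈ S) (hr : 0 < r) :
    ENNReal.ofReal (min 1 ((r / L) ^ c)) ≤ ν (ball x r) := by
  have hle : (r / L) ^ c ≤ k * r ^ c :=
    calc (r / L) ^ c ≤ k * L ^ c * (r / L) ^ c := le_mul_of_one_le_left (by positivity) hkL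
      _ = k * r ^ c := mul_rpow_mul_div_rpow hr.le hL
  exact (ENNReal.ofReal_le_ofReal (min_le_min_left 1 hle)).trans (hν x hx r hr)

lemma IsStandardOn.mixture (hν : IsStandardOn k c ν S) (hS : ∀ x ∈ S, ∀ y ∈ S, dist x y ≤ L)
    (hL : 0 < L) (hμ : 1 ≤ μ S) (hc : 0 ≤ c) (hkL : 1 ≤ k * L ^ c) (hcb : c ≤ b)
    (hp : p ∈ Icc (0 : ℝ) 1) (hap : a * L ^ b ≤ p) :
    IsStandardOn a b (ENNReal.ofReal (1 - p) • μ + ENNReal.ofReal p • ν) S := by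
  intro x hx r hr
  have hνball := hν.ofReal_min_div_rpow_le hkL hL hx hr
  simp only [Measure.add_apply, Measure.smul_apply, smul_eq_mul]
  rcases le_or_gt r L with hrL | hLr
  · have hpow : (r / L) ^ c ≤ 1 := Real.rpow_le_one (by positivity) ((div_le_one hL).2 hrL) hc
    calc ENNReal.ofReal (min 1 (a * r ^ b))
        ≤ ENNReal.ofReal (p * (r / L) ^ c) := ENNReal.ofReal_le_ofReal <|
          (min_le_right _ _).trans (mul_rpow_le_mul_div_rpow hcb hp.1 hr hrL hap)
      _ = ENNReal.ofReal p * ENNReal.ofReal ((r / L) ^ c) := ENNReal.ofReal_mul hp.1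
      _ ≤ ENNReal.ofReal p * ν (ball x r) := by
          rw [min_eq_right hpow] at hνball
          gcongr
      _ ≤ _ := le_add_self
  · have hpow : 1 ≤ (r / L) ^ c := Real.one_le_rpow ((one_le_div hL).2 hLr.le) hc
    have hball : S ⊆ ball x r := fun y hy ↦ (hS y hy x hx).trans_lt hLr
    calc ENNReal.ofReal (min 1 (a * r ^ b))
        ≤ 1 := ENNReal.ofReal_le_one.2 (min_le_left _ _)
      _ = ENNReal.ofReal (1 - p) * 1 + ENNReal.ofReal p * 1 := by
          rw [mul_one, mul_one, ← ENNReal.ofReal_add (sub_nonneg.2 hp.2) hp.1, sub_add_cancel,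
            ENNReal.ofReal_one]
      _ ≤ ENNReal.ofReal (1 - p) * μ (ball x r) + ENNReal.ofReal p * ν (ball x r) := by
          rw [min_eq_left hpow, ENNReal.ofReal_one] at hνball
          gcongr
          exact hμ.trans (measure_mono hball)

end Mixture

theorem mixture_is_standard_general {a b c d p : ℝ} {μ : Measure ℝ} (hb : 1 ≤ b) (hcd : c < d)
    (hμ : 1 ≤ μ (Icc c d)) (hp : p ∈ Icc (0 : ℝ) 1) (hap : a * (d - c) ^ b ≤ p) :
    IsStandardOn a b (ENNReal.ofReal (1 - p) • μ + ENNReal.ofReal p • volume[|Icc c d])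
      (Icc c d) := by
  have hlen : 0 < d - c := sub_pos.2 hcd
  have hscale : 1 ≤ (d - c)⁻¹ * (d - c) ^ (1 : ℝ) := by
    rw [Real.rpow_one, inv_mul_cancel₀ hlen.ne']
  exact (isStandardOn_cond_volume_Icc hcd).mixture (fun _ hx _ hy ↦ Real.dist_le_of_mem_Icc hx hy)
    hlen hμ zero_le_one hscale hb hp hap

/-- Let `a > 0`, `b ≥ 1`, `n ≥ 1`, `L = (a n)^{−1/b}`, and let
`P = (1 − 1/n) δ₀ + (1/n) U([0, L])` be the mixture of the Dirac mass at `0` and the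
uniform distribution on `[0, L]`. Then `P` is `(a,b)`-standard on its support `[0, L]`:
for every `x ∈ [0, L]` and `r > 0`, `P(B(x, r)) ≥ min(1, a r^b)`. -/
theorem mixture_is_standard (a b : ℝ) (ha : 0 < a) (hb : 1 ≤ b) (n : ℕ) (hn : 1 ≤ n)
    (L : ℝ) (hL : L = (a * n) ^ (-(1 / b) : ℝ))
    (U : Measure ℝ) (hU : U = (ENNReal.ofReal L)⁻¹ • volume.restrict (Set.Icc 0 L))
    (P : Measure ℝ)
    (hP : P = ENNReal.ofReal (1 - 1 / (n : ℝ)) • Measure.dirac (0 : ℝ) +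
        ENNReal.ofReal (1 / (n : ℝ)) • U) :
    ∀ x ∈ Set.Icc (0 : ℝ) L, ∀ r : ℝ, 0 < r →
      ENNReal.ofReal (min 1 (a * r ^ b)) ≤ P (ball x r) := by
  have hn_pos : (0 : ℝ) < n := Nat.cast_pos.2 hn
  have hL_pos : 0 < L := hL ▸ Real.rpow_pos_of_pos (mul_pos ha hn_pos) _
  have hLb : a * (L - 0) ^ b = 1 / n := by
    rw [sub_zero, hL, rpow_neg_one_div_rpow (by positivity) (by positivity)]
    field_simp
  have hU_cond : U = volume[|Icc 0 L] := by
    rw [hU, ProbabilityTheory.cond, Real.volume_Icc, sub_zero]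
  have hdirac : 1 ≤ Measure.dirac (0 : ℝ) (Icc 0 L) :=
    (Measure.dirac_apply_of_mem (left_mem_Icc.2 hL_pos.le)).ge
  have hweight : 1 / (n : ℝ) ∈ Icc (0 : ℝ) 1 :=
    ⟨by positivity, (div_le_one hn_pos).2 (Nat.one_le_cast.2 hn)⟩
  rw [hP, hU_cond]
  exact mixture_is_standard_general hb hL_pos hdirac hweight hLb.le
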